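/- arXiv:math-ph/0305046 — 2 statements merged into one kernel-verified Lean document; each statement's English description precedes it below -/
import Mathlib

section
/- Let Ω ⊆ ℝ³ be open and let α(x) = α₁(x₁)e₁ + α₂(x₂)e₂ + α₃(x₃)e₃, where α₁, α₂, α₃ : ℝ → ℂ are continuously differentiable, and set v_k := −Dα^{(k)} − α² (k = 0,1,2,3). Suppose g : Ω → ℍ(ℂ) is twice differentiable, g = g₀ + g₁e₁ + g₂e₂ + g₃e₃, and the function f := Dg − gα satisfies Df + fα = 0 on Ω. Then necessarily each component g_k satisfies −Δg_k + v_k g_k = 0 on Ω. -/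
noncomputable section

abbrev HC := Quaternion ℂ

def e1 : HC := ⟨0, 1, 0, 0⟩
def e2 : HC := ⟨0, 0, 1, 0⟩
def e3 : HC := ⟨0, 0, 0, 1⟩

def pd (k : Fin 3) (g : (Fin 3 → ℝ) → ℂ) (x : Fin 3 → ℝ) : ℂ :=
  fderiv ℝ g x (Pi.single k 1)

def lap (g : (Fin 3 → ℝ) → ℂ) (x : Fin 3 → ℝ) : ℂ :=
  pd 0 (pd 0 g) x + pd 1 (pd 1 g) x + pd 2 (pd 2 g) x

def pdq (k : Fin 3) (f : (Fin 3 → ℝ) → HC) (x : Fin 3 → ℝ) : HC :=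
  ⟨pd k (fun y => (f y).re) x, pd k (fun y => (f y).imI) x,
   pd k (fun y => (f y).imJ) x, pd k (fun y => (f y).imK) x⟩

def Dq (f : (Fin 3 → ℝ) → HC) (x : Fin 3 → ℝ) : HC :=
  e1 * pdq 0 f x + e2 * pdq 1 f x + e3 * pdq 2 f x

def lapq (f : (Fin 3 → ℝ) → HC) (x : Fin 3 → ℝ) : HC :=
  ⟨lap (fun y => (f y).re) x, lap (fun y => (f y).imI) x,
   lap (fun y => (f y).imJ) x, lap (fun y => (f y).imK) x⟩

def QDiffOn (f : (Fin 3 → ℝ) → HC) (Ω : Set (Fin 3 → ℝ)) : Prop :=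
  DifferentiableOn ℝ (fun y => (f y).re) Ω ∧ DifferentiableOn ℝ (fun y => (f y).imI) Ω ∧
  DifferentiableOn ℝ (fun y => (f y).imJ) Ω ∧ DifferentiableOn ℝ (fun y => (f y).imK) Ω

def QC2On (f : (Fin 3 → ℝ) → HC) (Ω : Set (Fin 3 → ℝ)) : Prop :=
  ContDiffOn ℝ 2 (fun y => (f y).re) Ω ∧ ContDiffOn ℝ 2 (fun y => (f y).imI) Ω ∧
  ContDiffOn ℝ 2 (fun y => (f y).imJ) Ω ∧ ContDiffOn ℝ 2 (fun y => (f y).imK) Ω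


/-- Build a biquaternion from its four complex components. -/
def quat (a b c d : ℂ) : HC := ⟨a, b, c, d⟩

/-- The diagonal purely vectorial function `α(x) = α₁(x₁)e₁ + α₂(x₂)e₂ + α₃(x₃)e₃`. -/
def dal (a1 a2 a3 : ℝ → ℂ) (x : Fin 3 → ℝ) : HC :=
  quat 0 (a1 (x 0)) (a2 (x 1)) (a3 (x 2))

/-- `s = α₁² + α₂² + α₃²` (so that `α² = −s`). -/
def sq3 (a1 a2 a3 : ℝ → ℂ) (x : Fin 3 → ℝ) : ℂ :=
  a1 (x 0) ^ 2 + a2 (x 1) ^ 2 + a3 (x 2) ^ 2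

/-- The scalar potentials `v_k = −Dα^{(k)} − α²`, written explicitly. -/
def vpot (a1 a2 a3 : ℝ → ℂ) : Fin 4 → (Fin 3 → ℝ) → ℂ :=
  ![fun x => deriv a1 (x 0) + deriv a2 (x 1) + deriv a3 (x 2) + sq3 a1 a2 a3 x,
    fun x => deriv a1 (x 0) - deriv a2 (x 1) - deriv a3 (x 2) + sq3 a1 a2 a3 x,
    fun x => -deriv a1 (x 0) + deriv a2 (x 1) - deriv a3 (x 2) + sq3 a1 a2 a3 x,
    fun x => -deriv a1 (x 0) - deriv a2 (x 1) + deriv a3 (x 2) + sq3 a1 a2 a3 x]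

/-- The scalar potentials `w_k = Dα^{(k)} − α²`, written explicitly. -/
def wpot (a1 a2 a3 : ℝ → ℂ) : Fin 4 → (Fin 3 → ℝ) → ℂ :=
  ![fun x => -(deriv a1 (x 0) + deriv a2 (x 1) + deriv a3 (x 2)) + sq3 a1 a2 a3 x,
    fun x => -deriv a1 (x 0) + deriv a2 (x 1) + deriv a3 (x 2) + sq3 a1 a2 a3 x,
    fun x => deriv a1 (x 0) - deriv a2 (x 1) + deriv a3 (x 2) + sq3 a1 a2 a3 x,
    fun x => deriv a1 (x 0) + deriv a2 (x 1) - deriv a3 (x 2) + sq3 a1 a2 a3 x]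

/-- The `k`-th complex component of a biquaternion. -/
def qc (k : Fin 4) (q : HC) : ℂ := ![q.re, q.imI, q.imJ, q.imK] k

lemma quat_mul (a b c d ap bp cp dp : ℂ) : quat a b c d * quat ap bp cp dp =
    quat (a * ap - b * bp - c * cp - d * dp) (a * bp + b * ap + c * dp - d * cp)
      (a * cp - b * dp + c * ap + d * bp) (a * dp + b * cp - c * bp + d * ap) := by
  ext
  · exact Quaternion.re_mul _ _
  · exact Quaternion.imI_mul _ _
  · exact Quaternion.imJ_mul _ _
  · exact Quaternion.imK_mul _ _

lemma quat_sub (a b c d ap bp cp dp : ℂ) : quat a b c d - quat ap bp cp dp =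
    quat (a - ap) (b - bp) (c - cp) (d - dp) := rfl

lemma quat_add (a b c d ap bp cp dp : ℂ) : quat a b c d + quat ap bp cp dp =
    quat (a + ap) (b + bp) (c + cp) (d + dp) := rfl

lemma Dq_quat (a b c d : (Fin 3 → ℝ) → ℂ) (x : Fin 3 → ℝ) :
    Dq (fun y => quat (a y) (b y) (c y) (d y)) x =
    quat (-pd 0 b x - pd 1 c x - pd 2 d x) (pd 0 a x + pd 1 d x - pd 2 c x)
      (-pd 0 d x + pd 1 a x + pd 2 b x) (pd 0 c x - pd 1 b x + pd 2 a x) := by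
  change quat 0 1 0 0 * quat (pd 0 a x) (pd 0 b x) (pd 0 c x) (pd 0 d x) +
    quat 0 0 1 0 * quat (pd 1 a x) (pd 1 b x) (pd 1 c x) (pd 1 d x) +
    quat 0 0 0 1 * quat (pd 2 a x) (pd 2 b x) (pd 2 c x) (pd 2 d x) = _
  simp only [quat_mul, quat_add]
  congr 1 <;> ring
lemma pd_add_fun (k : Fin 3) (f g : (Fin 3 → ℝ) → ℂ) (x : Fin 3 → ℝ)
    (hf : DifferentiableAt ℝ f x) (hg : DifferentiableAt ℝ g x) :
    pd k (fun y => f y + g y) x = pd k f x + pd k g x := by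
  unfold pd; rw [fderiv_fun_add hf hg]; rfl

lemma pd_sub_fun (k : Fin 3) (f g : (Fin 3 → ℝ) → ℂ) (x : Fin 3 → ℝ)
    (hf : DifferentiableAt ℝ f x) (hg : DifferentiableAt ℝ g x) :
    pd k (fun y => f y - g y) x = pd k f x - pd k g x := by
  unfold pd; rw [fderiv_fun_sub hf hg]; rfl

lemma pd_neg_fun (k : Fin 3) (f : (Fin 3 → ℝ) → ℂ) (x : Fin 3 → ℝ) :
    pd k (fun y => - f y) x = - pd k f x := by
  unfold pd; rw [fderiv_fun_neg]; rfl

lemma pd_mul_fun (k : Fin 3) (f g : (Fin 3 → ℝ) → ℂ) (x : Fin 3 → ℝ)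
    (hf : DifferentiableAt ℝ f x) (hg : DifferentiableAt ℝ g x) :
    pd k (fun y => f y * g y) x = f x * pd k g x + g x * pd k f x := by
  unfold pd; rw [fderiv_fun_mul hf hg]; simp

lemma pd_coord (k j : Fin 3) (a : ℝ → ℂ) (x : Fin 3 → ℝ) (ha : Differentiable ℝ a) :
    pd k (fun y => a (y j)) x = if k = j then deriv a (x j) else 0 := by
  unfold pd
  have h1 : HasFDerivAt (fun y : Fin 3 → ℝ => y j)
      (ContinuousLinearMap.proj (R := ℝ) (φ := fun _ : Fin 3 => ℝ) j) x :=
    (ContinuousLinearMap.proj (R := ℝ) (φ := fun _ : Fin 3 => ℝ) j).hasFDerivAt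
  have h0 : HasDerivAt a (deriv a (x j)) ((fun y : Fin 3 → ℝ => y j) x) := (ha (x j)).hasDerivAt
  have h2 := h0.hasFDerivAt.comp x h1
  have h3 : fderiv ℝ (fun y : Fin 3 → ℝ => a (y j)) x = _ := h2.fderiv
  rw [h3]
  by_cases h : k = j
  · subst h; simp
  · simp [h, Pi.single_apply, Ne.symm h]

lemma pd_diff (k : Fin 3) (G : (Fin 3 → ℝ) → ℂ) (x : Fin 3 → ℝ)
    (h : ContDiffAt ℝ 2 G x) : DifferentiableAt ℝ (pd k G) x := by
  have h1 : DifferentiableAt ℝ (fderiv ℝ G) x :=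
    (h.fderiv_right (m := 1) (by norm_num)).differentiableAt (by norm_num)
  unfold pd
  exact h1.clm_apply (differentiableAt_const _)

lemma pd_symm (i j : Fin 3) (G : (Fin 3 → ℝ) → ℂ) (x : Fin 3 → ℝ)
    (h : ContDiffAt ℝ 2 G x) : pd i (pd j G) x = pd j (pd i G) x := by
  have h1 : DifferentiableAt ℝ (fderiv ℝ G) x :=
    (h.fderiv_right (m := 1) (by norm_num)).differentiableAt (by norm_num)
  have key : ∀ i j : Fin 3, pd i (pd j G) x
      = fderiv ℝ (fderiv ℝ G) x (Pi.single i 1) (Pi.single j 1) := by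
    intro i j
    have := (h1.hasFDerivAt.clm_apply
      (hasFDerivAt_const (Pi.single j (1 : ℝ) : Fin 3 → ℝ) x)).fderiv
    unfold pd
    rw [this]
    simp
  rw [key, key]
  exact (h.isSymmSndFDerivAt (by simp)) _ _

/-- Proposition gsol of the paper: if `f = (D − M^α)g` solves
`Df + fα = 0` with diagonal `α`, then necessarily each component `g_k` solves
`−Δg_k + v_k g_k = 0`. -/
theorem potential_components_necessity
    (Ω : Set (Fin 3 → ℝ)) (hΩ : IsOpen Ω)
    (a1 a2 a3 : ℝ → ℂ)
    (ha1 : ContDiff ℝ 1 a1) (ha2 : ContDiff ℝ 1 a2) (ha3 : ContDiff ℝ 1 a3)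
    (g : (Fin 3 → ℝ) → HC) (hg : QC2On g Ω)
    (hfeq : ∀ x ∈ Ω,
      Dq (fun y => Dq g y - g y * dal a1 a2 a3 y) x +
        (Dq g x - g x * dal a1 a2 a3 x) * dal a1 a2 a3 x = 0) :
    ∀ k : Fin 4, ∀ x ∈ Ω,
      -lap (fun y => qc k (g y)) x + vpot a1 a2 a3 k x * qc k (g x) = 0 := by
  intro k x hx
  obtain ⟨h0, h1, h2, h3⟩ := hg
  have c0 := h0.contDiffAt (hΩ.mem_nhds hx)
  have c1 := h1.contDiffAt (hΩ.mem_nhds hx)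
  have c2 := h2.contDiffAt (hΩ.mem_nhds hx)
  have c3 := h3.contDiffAt (hΩ.mem_nhds hx)
  have H := hfeq x hx
  clear hfeq h0 h1 h2 h3
  have qe : ∀ y, g y = quat (g y).re (g y).imI (g y).imJ (g y).imK := fun y => rfl
  generalize hG0 : (fun y => (g y).re) = G0 at c0
  generalize hG1 : (fun y => (g y).imI) = G1 at c1
  generalize hG2 : (fun y => (g y).imJ) = G2 at c2
  generalize hG3 : (fun y => (g y).imK) = G3 at c3
  obtain rfl : g = fun y => quat (G0 y) (G1 y) (G2 y) (G3 y) := by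
    funext y; rw [← hG0, ← hG1, ← hG2, ← hG3]; rfl
  clear hG0 hG1 hG2 hG3 qe
  have A1 := ha1.differentiable (by norm_num)
  have A2 := ha2.differentiable (by norm_num)
  have A3 := ha3.differentiable (by norm_num)
  have B1 : DifferentiableAt ℝ (fun y : Fin 3 → ℝ => a1 (y 0)) x := by fun_prop
  have B2 : DifferentiableAt ℝ (fun y : Fin 3 → ℝ => a2 (y 1)) x := by fun_prop
  have B3 : DifferentiableAt ℝ (fun y : Fin 3 → ℝ => a3 (y 2)) x := by fun_prop
  have d0 := c0.differentiableAt (by norm_num)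
  have d1 := c1.differentiableAt (by norm_num)
  have d2 := c2.differentiableAt (by norm_num)
  have d3 := c3.differentiableAt (by norm_num)
  have p0 := fun k => pd_diff k G0 x c0
  have p1 := fun k => pd_diff k G1 x c1
  have p2 := fun k => pd_diff k G2 x c2
  have p3 := fun k => pd_diff k G3 x c3
  simp only [Dq_quat, dal, quat_mul, quat_sub, quat_add] at H
  have Hr : _ = (0 : ℂ) := congrArg (fun q : HC => q.re) H
  have Hi : _ = (0 : ℂ) := congrArg (fun q : HC => q.imI) H
  have Hj : _ = (0 : ℂ) := congrArg (fun q : HC => q.imJ) H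
  have Hk : _ = (0 : ℂ) := congrArg (fun q : HC => q.imK) H
  clear H
  simp only [quat, mul_zero, zero_sub, add_zero, zero_add] at Hr Hi Hj Hk
  simp (disch := fun_prop) only [pd_add_fun, pd_sub_fun, pd_neg_fun, pd_mul_fun, pd_coord] at Hr Hi Hj Hk
  simp at Hr Hi Hj Hk
  have s0 := fun i j => pd_symm i j G0 x c0
  have s1 := fun i j => pd_symm i j G1 x c1
  have s2 := fun i j => pd_symm i j G2 x c2
  have s3 := fun i j => pd_symm i j G3 x c3
  simp only [s0 1 0, s0 2 0, s0 2 1, s1 1 0, s1 2 0, s1 2 1, s2 1 0, s2 2 0, s2 2 1,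
    s3 1 0, s3 2 0, s3 2 1] at Hr Hi Hj Hk
  fin_cases k
  · simp [lap, qc, vpot, sq3, quat]
    linear_combination Hr
  · simp [lap, qc, vpot, sq3, quat]
    linear_combination Hi
  · simp [lap, qc, vpot, sq3, quat]
    linear_combination Hj
  · simp [lap, qc, vpot, sq3, quat]
    linear_combination Hk
end
end

section
/- Let Ω ⊆ ℝ³ be open and let α(x) = α₁(x₁)e₁ + α₂(x₂)e₂ + α₃(x₃)e₃ with α₁, α₂, α₃ : ℝ → ℂ continuously differentiable, and set w_k := Dα^{(k)} − α² (k = 0,1,2,3). Given f = f₀ + f₁e₁ + f₂e₂ + f₃e₃ : Ω → ℍ(ℂ), suppose u₀, u₁, u₂, u₃ : Ω → ℂ are twice differentiable scalar functions satisfying −Δu_k + w_k u_k = f_k on Ω. Then the function g := (D + M^α)u = Du + uα, where u = u₀ + u₁e₁ + u₂e₂ + u₃e₃, solves the inhomogeneous equation Dg − gα = f on Ω. -/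
noncomputable section

theorem aux_e1_re : e1.re = 0 := rfl
theorem aux_e1_imI : e1.imI = 1 := rfl
theorem aux_e1_imJ : e1.imJ = 0 := rfl
theorem aux_e1_imK : e1.imK = 0 := rfl
theorem aux_e2_re : e2.re = 0 := rfl
theorem aux_e2_imI : e2.imI = 0 := rfl
theorem aux_e2_imJ : e2.imJ = 1 := rfl
theorem aux_e2_imK : e2.imK = 0 := rfl
theorem aux_e3_re : e3.re = 0 := rfl
theorem aux_e3_imI : e3.imI = 0 := rfl
theorem aux_e3_imJ : e3.imJ = 0 := rfl
theorem aux_e3_imK : e3.imK = 1 := rfl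
theorem aux_quat_re (a b c d : ℂ) : (quat a b c d).re = a := rfl
theorem aux_pdq_re (k : Fin 3) (f : (Fin 3 → ℝ) → HC) (x : Fin 3 → ℝ) :
    (pdq k f x).re = pd k (fun y => (f y).re) x := rfl
theorem aux_quat_imI (a b c d : ℂ) : (quat a b c d).imI = b := rfl
theorem aux_pdq_imI (k : Fin 3) (f : (Fin 3 → ℝ) → HC) (x : Fin 3 → ℝ) :
    (pdq k f x).imI = pd k (fun y => (f y).imI) x := rfl
theorem aux_quat_imJ (a b c d : ℂ) : (quat a b c d).imJ = c := rfl
theorem aux_pdq_imJ (k : Fin 3) (f : (Fin 3 → ℝ) → HC) (x : Fin 3 → ℝ) :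
    (pdq k f x).imJ = pd k (fun y => (f y).imJ) x := rfl
theorem aux_quat_imK (a b c d : ℂ) : (quat a b c d).imK = d := rfl
theorem aux_pdq_imK (k : Fin 3) (f : (Fin 3 → ℝ) → HC) (x : Fin 3 → ℝ) :
    (pdq k f x).imK = pd k (fun y => (f y).imK) x := rfl

theorem aux_pd_add (k : Fin 3) {f g : (Fin 3 → ℝ) → ℂ} {x : Fin 3 → ℝ}
    (hf : DifferentiableAt ℝ f x) (hg : DifferentiableAt ℝ g x) :
    pd k (fun y => f y + g y) x = pd k f x + pd k g x := by
  unfold pd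
  rw [fderiv_fun_add hf hg]; rfl

theorem aux_pd_sub (k : Fin 3) {f g : (Fin 3 → ℝ) → ℂ} {x : Fin 3 → ℝ}
    (hf : DifferentiableAt ℝ f x) (hg : DifferentiableAt ℝ g x) :
    pd k (fun y => f y - g y) x = pd k f x - pd k g x := by
  unfold pd
  rw [fderiv_fun_sub hf hg]; rfl

theorem aux_pd_neg (k : Fin 3) {f : (Fin 3 → ℝ) → ℂ} {x : Fin 3 → ℝ} :
    pd k (fun y => - f y) x = - pd k f x := by
  unfold pd
  rw [fderiv_fun_neg]; rfl

theorem aux_pd_mul (k : Fin 3) {f g : (Fin 3 → ℝ) → ℂ} {x : Fin 3 → ℝ}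
    (hf : DifferentiableAt ℝ f x) (hg : DifferentiableAt ℝ g x) :
    pd k (fun y => f y * g y) x = f x * pd k g x + pd k f x * g x := by
  unfold pd
  rw [fderiv_fun_mul hf hg]
  simp [mul_comm]

theorem aux_diff_comp (j : Fin 3) {a : ℝ → ℂ} (ha : ContDiff ℝ 1 a) (x : Fin 3 → ℝ) :
    DifferentiableAt ℝ (fun y : Fin 3 → ℝ => a (y j)) x := by
  have h : Differentiable ℝ a := ha.differentiable (by norm_num)
  fun_prop

theorem aux_pd_comp (k j : Fin 3) {a : ℝ → ℂ} (ha : ContDiff ℝ 1 a) (x : Fin 3 → ℝ) :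
    pd k (fun y => a (y j)) x = if k = j then deriv a (x j) else 0 := by
  have h : HasDerivAt a (deriv a (x j)) (x j) :=
    (ha.differentiable (by norm_num) (x j)).hasDerivAt
  have h2 : HasFDerivAt (fun y : Fin 3 → ℝ => y j)
      (ContinuousLinearMap.proj (R := ℝ) (φ := fun _ : Fin 3 => ℝ) j) x :=
    (ContinuousLinearMap.proj (R := ℝ) (φ := fun _ : Fin 3 => ℝ) j).hasFDerivAt
  have h3 := (h.hasFDerivAt.comp x h2).fderiv
  unfold pd
  change fderiv ℝ (a ∘ fun y : Fin 3 → ℝ => y j) x _ = _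
  rw [h3]
  by_cases hkj : k = j
  · subst hkj; simp
  · simp [Ne.symm hkj, hkj]

theorem aux_diff_fderiv {Ω : Set (Fin 3 → ℝ)} (hΩ : IsOpen Ω) {u : (Fin 3 → ℝ) → ℂ}
    (hu : ContDiffOn ℝ 2 u Ω) {x : Fin 3 → ℝ} (hx : x ∈ Ω) :
    DifferentiableAt ℝ (fderiv ℝ u) x :=
  ((hu.contDiffAt (hΩ.mem_nhds hx)).fderiv_right (m := 1) (by norm_num)).differentiableAt
    (by norm_num)

theorem aux_diff_pd (k : Fin 3) {Ω : Set (Fin 3 → ℝ)} (hΩ : IsOpen Ω) {u : (Fin 3 → ℝ) → ℂ}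
    (hu : ContDiffOn ℝ 2 u Ω) {x : Fin 3 → ℝ} (hx : x ∈ Ω) :
    DifferentiableAt ℝ (pd k u) x :=
  (aux_diff_fderiv hΩ hu hx).clm_apply (differentiableAt_const _)

theorem aux_pd_pd (j k : Fin 3) {Ω : Set (Fin 3 → ℝ)} (hΩ : IsOpen Ω) {u : (Fin 3 → ℝ) → ℂ}
    (hu : ContDiffOn ℝ 2 u Ω) {x : Fin 3 → ℝ} (hx : x ∈ Ω) :
    pd j (pd k u) x = pd k (pd j u) x := by
  have key : ∀ j k : Fin 3, pd j (pd k u) x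
      = fderiv ℝ (fderiv ℝ u) x (Pi.single j 1) (Pi.single k 1) := by
    intro j k
    have := fderiv_clm_apply (aux_diff_fderiv hΩ hu hx)
      (differentiableAt_const (x := x) (Pi.single k (1 : ℝ) : Fin 3 → ℝ))
    change fderiv ℝ (fun y => fderiv ℝ u y (Pi.single k 1)) x (Pi.single j 1) = _
    rw [this]
    simp
  rw [key, key]
  exact ((hu.contDiffAt (hΩ.mem_nhds hx)).isSymmSndFDerivAt (by simp)) _ _

/-- constructive content of Proposition exist: if `u_k` solve the
inhomogeneous Schrödinger equations `−Δu_k + w_k u_k = f_k`, then `g = (D + M^α)u`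
solves the inhomogeneous equation `Dg − gα = f`. -/
theorem inhomogeneous_solvability
    (Ω : Set (Fin 3 → ℝ)) (hΩ : IsOpen Ω)
    (a1 a2 a3 : ℝ → ℂ)
    (ha1 : ContDiff ℝ 1 a1) (ha2 : ContDiff ℝ 1 a2) (ha3 : ContDiff ℝ 1 a3)
    (f0 f1 f2 f3 : (Fin 3 → ℝ) → ℂ)
    (u0 u1 u2 u3 : (Fin 3 → ℝ) → ℂ)
    (hu0 : ContDiffOn ℝ 2 u0 Ω) (hu1 : ContDiffOn ℝ 2 u1 Ω)
    (hu2 : ContDiffOn ℝ 2 u2 Ω) (hu3 : ContDiffOn ℝ 2 u3 Ω)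
    (heq0 : ∀ x ∈ Ω, -lap u0 x + wpot a1 a2 a3 0 x * u0 x = f0 x)
    (heq1 : ∀ x ∈ Ω, -lap u1 x + wpot a1 a2 a3 1 x * u1 x = f1 x)
    (heq2 : ∀ x ∈ Ω, -lap u2 x + wpot a1 a2 a3 2 x * u2 x = f2 x)
    (heq3 : ∀ x ∈ Ω, -lap u3 x + wpot a1 a2 a3 3 x * u3 x = f3 x) :
    (let u : (Fin 3 → ℝ) → HC := fun y => quat (u0 y) (u1 y) (u2 y) (u3 y)
     let g : (Fin 3 → ℝ) → HC := fun y => Dq u y + u y * dal a1 a2 a3 y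
     ∀ x ∈ Ω, Dq g x - g x * dal a1 a2 a3 x = quat (f0 x) (f1 x) (f2 x) (f3 x)) := by
  intro u g x hx
  have hgr : (fun y => (g y).re) = fun y => -(pd 0 u1 y + pd 1 u2 y + pd 2 u3 y)
      - (u1 y * a1 (y 0) + u2 y * a2 (y 1) + u3 y * a3 (y 2)) := by
    funext y
    simp [g, u, Dq, dal,
      aux_e1_re, aux_e1_imI, aux_e1_imJ, aux_e1_imK, aux_e2_re,
      aux_e2_imI, aux_e2_imJ, aux_e2_imK, aux_e3_re, aux_e3_imI,
      aux_e3_imJ, aux_e3_imK, aux_quat_re, aux_pdq_re, aux_quat_imI,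
      aux_pdq_imI, aux_quat_imJ, aux_pdq_imJ, aux_quat_imK, aux_pdq_imK]
    ring
  have hgi : (fun y => (g y).imI) = fun y => (pd 0 u0 y + pd 1 u3 y - pd 2 u2 y)
      + (u0 y * a1 (y 0) + u2 y * a3 (y 2) - u3 y * a2 (y 1)) := by
    funext y
    simp [g, u, Dq, dal,
      aux_e1_re, aux_e1_imI, aux_e1_imJ, aux_e1_imK, aux_e2_re,
      aux_e2_imI, aux_e2_imJ, aux_e2_imK, aux_e3_re, aux_e3_imI,
      aux_e3_imJ, aux_e3_imK, aux_quat_re, aux_pdq_re, aux_quat_imI,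
      aux_pdq_imI, aux_quat_imJ, aux_pdq_imJ, aux_quat_imK, aux_pdq_imK]
    ring
  have hgj : (fun y => (g y).imJ) = fun y => (pd 1 u0 y + pd 2 u1 y - pd 0 u3 y)
      + (u0 y * a2 (y 1) + u3 y * a1 (y 0) - u1 y * a3 (y 2)) := by
    funext y
    simp [g, u, Dq, dal,
      aux_e1_re, aux_e1_imI, aux_e1_imJ, aux_e1_imK, aux_e2_re,
      aux_e2_imI, aux_e2_imJ, aux_e2_imK, aux_e3_re, aux_e3_imI,
      aux_e3_imJ, aux_e3_imK, aux_quat_re, aux_pdq_re, aux_quat_imI,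
      aux_pdq_imI, aux_quat_imJ, aux_pdq_imJ, aux_quat_imK, aux_pdq_imK]
    ring
  have hgk : (fun y => (g y).imK) = fun y => (pd 2 u0 y + pd 0 u2 y - pd 1 u1 y)
      + (u0 y * a3 (y 2) + u1 y * a2 (y 1) - u2 y * a1 (y 0)) := by
    funext y
    simp [g, u, Dq, dal,
      aux_e1_re, aux_e1_imI, aux_e1_imJ, aux_e1_imK, aux_e2_re,
      aux_e2_imI, aux_e2_imJ, aux_e2_imK, aux_e3_re, aux_e3_imI,
      aux_e3_imJ, aux_e3_imK, aux_quat_re, aux_pdq_re, aux_quat_imI,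
      aux_pdq_imI, aux_quat_imJ, aux_pdq_imJ, aux_quat_imK, aux_pdq_imK]
    ring
  have d0 : DifferentiableAt ℝ u0 x :=
    (hu0.contDiffAt (hΩ.mem_nhds hx)).differentiableAt (by norm_num)
  have d1 : DifferentiableAt ℝ u1 x :=
    (hu1.contDiffAt (hΩ.mem_nhds hx)).differentiableAt (by norm_num)
  have d2 : DifferentiableAt ℝ u2 x :=
    (hu2.contDiffAt (hΩ.mem_nhds hx)).differentiableAt (by norm_num)
  have d3 : DifferentiableAt ℝ u3 x :=
    (hu3.contDiffAt (hΩ.mem_nhds hx)).differentiableAt (by norm_num)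
  have p0 := fun k => aux_diff_pd k hΩ hu0 hx
  have p1 := fun k => aux_diff_pd k hΩ hu1 hx
  have p2 := fun k => aux_diff_pd k hΩ hu2 hx
  have p3 := fun k => aux_diff_pd k hΩ hu3 hx
  have da1 : Differentiable ℝ a1 := ha1.differentiable (by norm_num)
  have da2 : Differentiable ℝ a2 := ha2.differentiable (by norm_num)
  have da3 : Differentiable ℝ a3 := ha3.differentiable (by norm_num)
  have b1 := aux_diff_comp 0 ha1 x
  have b2 := aux_diff_comp 1 ha2 x
  have b3 := aux_diff_comp 2 ha3 x
  have c1 := fun k => aux_pd_comp k 0 ha1 x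
  have c2 := fun k => aux_pd_comp k 1 ha2 x
  have c3 := fun k => aux_pd_comp k 2 ha3 x
  have hr : ∀ k, pd k (fun y => (g y).re) x =
      -(pd k (pd 0 u1) x + pd k (pd 1 u2) x + pd k (pd 2 u3) x)
      - ((u1 x * (if k = 0 then deriv a1 (x 0) else 0) + pd k u1 x * a1 (x 0))
       + (u2 x * (if k = 1 then deriv a2 (x 1) else 0) + pd k u2 x * a2 (x 1))
       + (u3 x * (if k = 2 then deriv a3 (x 2) else 0) + pd k u3 x * a3 (x 2))) := by
    intro k
    rw [hgr, aux_pd_sub k (by fun_prop) (by fun_prop), aux_pd_neg,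
      aux_pd_add k (by fun_prop) (by fun_prop), aux_pd_add k (by fun_prop) (by fun_prop),
      aux_pd_add k (by fun_prop) (by fun_prop), aux_pd_add k (by fun_prop) (by fun_prop),
      aux_pd_mul k d1 b1, aux_pd_mul k d2 b2, aux_pd_mul k d3 b3, c1, c2, c3]
  have hi : ∀ k, pd k (fun y => (g y).imI) x =
      (pd k (pd 0 u0) x + pd k (pd 1 u3) x - pd k (pd 2 u2) x)
      + ((u0 x * (if k = 0 then deriv a1 (x 0) else 0) + pd k u0 x * a1 (x 0))
       + (u2 x * (if k = 2 then deriv a3 (x 2) else 0) + pd k u2 x * a3 (x 2))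
       - (u3 x * (if k = 1 then deriv a2 (x 1) else 0) + pd k u3 x * a2 (x 1))) := by
    intro k
    rw [hgi, aux_pd_add k (by fun_prop) (by fun_prop),
      aux_pd_sub k (by fun_prop) (by fun_prop), aux_pd_add k (by fun_prop) (by fun_prop),
      aux_pd_sub k (by fun_prop) (by fun_prop), aux_pd_add k (by fun_prop) (by fun_prop),
      aux_pd_mul k d0 b1, aux_pd_mul k d2 b3, aux_pd_mul k d3 b2, c1, c2, c3]
  have hj : ∀ k, pd k (fun y => (g y).imJ) x =
      (pd k (pd 1 u0) x + pd k (pd 2 u1) x - pd k (pd 0 u3) x)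
      + ((u0 x * (if k = 1 then deriv a2 (x 1) else 0) + pd k u0 x * a2 (x 1))
       + (u3 x * (if k = 0 then deriv a1 (x 0) else 0) + pd k u3 x * a1 (x 0))
       - (u1 x * (if k = 2 then deriv a3 (x 2) else 0) + pd k u1 x * a3 (x 2))) := by
    intro k
    rw [hgj, aux_pd_add k (by fun_prop) (by fun_prop),
      aux_pd_sub k (by fun_prop) (by fun_prop), aux_pd_add k (by fun_prop) (by fun_prop),
      aux_pd_sub k (by fun_prop) (by fun_prop), aux_pd_add k (by fun_prop) (by fun_prop),
      aux_pd_mul k d0 b2, aux_pd_mul k d3 b1, aux_pd_mul k d1 b3, c1, c2, c3]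
  have hk : ∀ k, pd k (fun y => (g y).imK) x =
      (pd k (pd 2 u0) x + pd k (pd 0 u2) x - pd k (pd 1 u1) x)
      + ((u0 x * (if k = 2 then deriv a3 (x 2) else 0) + pd k u0 x * a3 (x 2))
       + (u1 x * (if k = 1 then deriv a2 (x 1) else 0) + pd k u1 x * a2 (x 1))
       - (u2 x * (if k = 0 then deriv a1 (x 0) else 0) + pd k u2 x * a1 (x 0))) := by
    intro k
    rw [hgk, aux_pd_add k (by fun_prop) (by fun_prop),
      aux_pd_sub k (by fun_prop) (by fun_prop), aux_pd_add k (by fun_prop) (by fun_prop),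
      aux_pd_sub k (by fun_prop) (by fun_prop), aux_pd_add k (by fun_prop) (by fun_prop),
      aux_pd_mul k d0 b3, aux_pd_mul k d1 b2, aux_pd_mul k d2 b1, c1, c2, c3]
  have s0 := fun i k => aux_pd_pd i k hΩ hu0 hx
  have q0 := heq0 x hx
  have s1 := fun i k => aux_pd_pd i k hΩ hu1 hx
  have q1 := heq1 x hx
  have s2 := fun i k => aux_pd_pd i k hΩ hu2 hx
  have q2 := heq2 x hx
  have s3 := fun i k => aux_pd_pd i k hΩ hu3 hx
  have q3 := heq3 x hx
  have vr := congrFun hgr x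
  have vi := congrFun hgi x
  have vj := congrFun hgj x
  have vk := congrFun hgk x
  simp only [lap, wpot, sq3, Matrix.cons_val] at q0 q1 q2 q3
  ext
  · simp [Dq, hr, hi, hj, hk, vr, vi, vj, vk, dal,
      aux_e1_re, aux_e1_imI, aux_e1_imJ, aux_e1_imK, aux_e2_re,
      aux_e2_imI, aux_e2_imJ, aux_e2_imK, aux_e3_re, aux_e3_imI,
      aux_e3_imJ, aux_e3_imK, aux_quat_re, aux_pdq_re, aux_quat_imI,
      aux_pdq_imI, aux_quat_imJ, aux_pdq_imJ, aux_quat_imK, aux_pdq_imK]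
    rw [← q0]
    linear_combination (s1 2 1) + (s2 0 2) + (s3 1 0)
  · simp [Dq, hr, hi, hj, hk, vr, vi, vj, vk, dal,
      aux_e1_re, aux_e1_imI, aux_e1_imJ, aux_e1_imK, aux_e2_re,
      aux_e2_imI, aux_e2_imJ, aux_e2_imK, aux_e3_re, aux_e3_imI,
      aux_e3_imJ, aux_e3_imK, aux_quat_re, aux_pdq_re, aux_quat_imI,
      aux_pdq_imI, aux_quat_imJ, aux_pdq_imJ, aux_quat_imK, aux_pdq_imK]
    rw [← q1]
    linear_combination (s0 1 2) + (s2 1 0) + (s3 2 0)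
  · simp [Dq, hr, hi, hj, hk, vr, vi, vj, vk, dal,
      aux_e1_re, aux_e1_imI, aux_e1_imJ, aux_e1_imK, aux_e2_re,
      aux_e2_imI, aux_e2_imJ, aux_e2_imK, aux_e3_re, aux_e3_imI,
      aux_e3_imJ, aux_e3_imK, aux_quat_re, aux_pdq_re, aux_quat_imI,
      aux_pdq_imI, aux_quat_imJ, aux_pdq_imJ, aux_quat_imK, aux_pdq_imK]
    rw [← q2]
    linear_combination (s0 2 0) + (s1 0 1) + (s3 2 1)
  · simp [Dq, hr, hi, hj, hk, vr, vi, vj, vk, dal,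
      aux_e1_re, aux_e1_imI, aux_e1_imJ, aux_e1_imK, aux_e2_re,
      aux_e2_imI, aux_e2_imJ, aux_e2_imK, aux_e3_re, aux_e3_imI,
      aux_e3_imJ, aux_e3_imK, aux_quat_re, aux_pdq_re, aux_quat_imI,
      aux_pdq_imI, aux_quat_imJ, aux_pdq_imJ, aux_quat_imK, aux_pdq_imK]
    rw [← q3]
    linear_combination (s0 0 1) + (s1 0 2) + (s2 1 2)
end
end
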